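/- Let N ≥ 1 and let α be a planar pair partition of {1,…,4N} containing no link of the form {2j−1,2j} for any j ∈ {1,…,2N}. Then the fused pure partition function Ẑ_α satisfies the Möbius covariance with conformal weight H = 1: for every Möbius map φ of the upper half-plane, φ(x) = (ax+b)/(cx+d) with ad−bc>0, such that cy_i+d ≠ 0 for all i and φ(y_1)<⋯<φ(y_{2N}), one has Ẑ_α(y_1,…,y_{2N}) = (∏_{i=1}^{2N} φ'(y_i)) · Ẑ_α(φ(y_1),…,φ(y_{2N})) for all y_1<⋯<y_{2N}. -/

import Mathlib

/-!
The covariance itself is elementary once the fusion limit is known to exist; the existence is the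
main point, because `fusedZ` is a `limUnder`, which carries no information otherwise.

**Existence of the limit.** Multiplying `pureZ α / fuseDenom` above and below by `fuseDenom` gives
`H x / ∏ₖ (x (hiIdx k) - x (loIdx k))`, where `H` is the combination, with coefficients
`(M⁻¹) α β`, of the regularized blocks `regBlock β`, which are smooth near the fusion point. On the
hyperplane where the `k`-th pair coincides, `regBlock β` vanishes if `β` has a slope at that pair, and
does not distinguish a local minimum from the corresponding local maximum (`regBlock_swap`).
A row of `M⁻¹` whose index `α` does not contain the `k`-th pair as a link annihilates every such
function of `β` (`inv_row_orthogonal`), because the columns of `M` indexed by the `β` that contain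
that link span the space of these functions. Hence `H` vanishes on each of the hyperplanes, and the
mean value theorem, applied once in each coordinate `hiIdx k`, turns the quotient into a mixed partial
derivative of `H` at a nearby point (`exists_mixed_divided_difference`). It converges by continuity
(`exists_fused_limit`).

**Covariance.** A Möbius map `φ` satisfies `φ t - φ s = (t - s) * φ'(s)^(1/2) * φ'(t)^(1/2)` when no
pole lies between `s` and `t`. As the signs of a Dyck path sum to zero, every conformal block
transforms with the factor `∏ φ'(x i)^(1/4)`, and so does `fuseDenom`, in the opposite direction;
together this is `ratio_of_scaled`. At the fusion point the factor `∏ φ'(x i)^(1/2)` over the doubled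
points becomes `∏ φ'(y i)`.
-/

open Filter Finset
open scoped BigOperators Classical Topology

noncomputable section

/-- The open chamber `x 0 < x 1 < ⋯ < x (n-1)`. -/
def chamber (n : ℕ) : Set (Fin n → ℝ) := {x | ∀ i j : Fin n, i < j → x i < x j}

/-- Planar pair partitions of `{0, …, 2N-1}` (i.e. of `{1,…,2N}` in 1-based labelling),
encoded as noncrossing fixed-point-free involutions: the links are the pairs `{i, f i}`. -/
def PlanarPair (N : ℕ) : Type :=
  {f : Fin (2 * N) → Fin (2 * N) //
    (∀ i, f (f i) = i) ∧ (∀ i, f i ≠ i) ∧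
      ∀ i j, i < j → j < f i → i < f j ∧ f j < f i}

instance (N : ℕ) : Fintype (PlanarPair N) := by
  unfold PlanarPair; infer_instance

/-- The Dyck step sequence of a planar pair partition: `+1` at openers, `-1` at closers. -/
def pairSign {N : ℕ} (α : PlanarPair N) (i : Fin (2 * N)) : ℝ :=
  if i < α.val i then 1 else -1

/-- The conformal block of a sign sequence: `∏_{i<j} (x_j - x_i)^{σ_i σ_j / 2}`. -/
def cblock {n : ℕ} (σ : Fin n → ℝ) (x : Fin n → ℝ) : ℝ :=
  ∏ p ∈ univ.filter (fun p : Fin n × Fin n => p.1 < p.2),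
    (x p.2 - x p.1) ^ (σ p.1 * σ p.2 / 2)

/-- `σ` is the step sequence of a Dyck path. -/
def IsDyck {n : ℕ} (σ : Fin n → ℝ) : Prop :=
  (∀ i, σ i = 1 ∨ σ i = -1) ∧
    (∀ k : Fin n, 0 ≤ ∑ i ∈ univ.filter (fun i : Fin n => i ≤ k), σ i) ∧
    ∑ i, σ i = 0

/-- The relation `α ⟵ β`: every link of `β` joins an opener of `α` to a closer of `α`. -/
def kwRel {N : ℕ} (α β : PlanarPair N) : Prop :=
  ∀ i, (i < α.val i) ↔ ¬ β.val i < α.val (β.val i)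

/-- The incidence matrix `M` of the relation `⟵`. -/
def Mmat (N : ℕ) : Matrix (PlanarPair N) (PlanarPair N) ℝ :=
  fun α β => if kwRel α β then 1 else 0

/-- The κ = 4 pure partition functions `Z_α = Σ_β (M⁻¹)_{α,β} U_β`. -/
def pureZ {N : ℕ} (α : PlanarPair N) (x : Fin (2 * N) → ℝ) : ℝ :=
  ∑ β : PlanarPair N, (Mmat N)⁻¹ α β * cblock (pairSign β) x

/-- Partial derivative in the `i`-th coordinate. -/
def pd {n : ℕ} (i : Fin n) (f : (Fin n → ℝ) → ℝ) : (Fin n → ℝ) → ℝ :=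
  fun x => fderiv ℝ f x (Pi.single i 1)

/-- Doubling a configuration point: the limit point of total fusion. -/
def dup {N : ℕ} (y : Fin (2 * N) → ℝ) : Fin (2 * (2 * N)) → ℝ :=
  fun i => y ⟨i.val / 2, by have := i.2; omega⟩

/-- The fusion normalization `∏_j (x_{2j} - x_{2j-1})^{1/2}`. -/
def fuseDenom {N : ℕ} (x : Fin (2 * (2 * N)) → ℝ) : ℝ :=
  ∏ j : Fin (2 * N),
    (x ⟨2 * j.val + 1, by have := j.2; omega⟩ - x ⟨2 * j.val, by have := j.2; omega⟩) ^
      ((1 : ℝ) / 2)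

/-- `α` contains no link of the form `{2j-1, 2j}` (1-based). -/
def noFuseLink {N : ℕ} (α : PlanarPair (2 * N)) : Prop :=
  ∀ j : Fin (2 * N),
    α.val ⟨2 * j.val, by have := j.2; omega⟩ ≠ ⟨2 * j.val + 1, by have := j.2; omega⟩

/-- The fused pure partition function `Ẑ_α`, defined as the fusion limit. -/
def fusedZ {N : ℕ} (α : PlanarPair (2 * N)) (y : Fin (2 * N) → ℝ) : ℝ :=
  limUnder (𝓝[chamber (2 * (2 * N))] dup y) fun x => pureZ α x / fuseDenom x

/-- The single-fusion of a conformal block with a slope at `j` (0-based `j`, `j+1`);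
the fused point `ξ` sits at coordinate `j`, and coordinate `j+1` is ignored. -/
def Ufuse {n : ℕ} (σ : Fin n → ℝ) (j : ℕ) (hj : j + 1 < n) (x : Fin n → ℝ) : ℝ :=
  (∏ p ∈ univ.filter (fun p : Fin n × Fin n =>
      p.1 < p.2 ∧ p.1.val ≠ j ∧ p.1.val ≠ j + 1 ∧ p.2.val ≠ j ∧ p.2.val ≠ j + 1),
    (x p.2 - x p.1) ^ (σ p.1 * σ p.2 / 2)) *
  ∏ i ∈ univ.filter (fun i : Fin n => i.val ≠ j ∧ i.val ≠ j + 1),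
    |x i - x ⟨j, by omega⟩| ^ (σ i * σ ⟨j, by omega⟩)

/-- The single-fusion `V_{σ/∨_j}` of a conformal block with a local minimum at `j`. -/
def Vfuse {n : ℕ} (σ : Fin n → ℝ) (j : ℕ) (hj : j + 1 < n) (x : Fin n → ℝ) : ℝ :=
  (∏ p ∈ univ.filter (fun p : Fin n × Fin n =>
      p.1 < p.2 ∧ p.1.val ≠ j ∧ p.1.val ≠ j + 1 ∧ p.2.val ≠ j ∧ p.2.val ≠ j + 1),
    (x p.2 - x p.1) ^ (σ p.1 * σ p.2 / 2)) *
  ∑ i ∈ univ.filter (fun i : Fin n => i.val ≠ j ∧ i.val ≠ j + 1),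
    σ i * σ ⟨j, by omega⟩ / (x i - x ⟨j, by omega⟩)

/-- The single-fusion `Z_{α/⨿_j}` of a pure partition function. -/
def Zfuse {N : ℕ} (α : PlanarPair N) (j : ℕ) (hj : j + 1 < 2 * N) (x : Fin (2 * N) → ℝ) : ℝ :=
  (∑ β ∈ univ.filter (fun β : PlanarPair N =>
      pairSign β ⟨j, by omega⟩ = -1 ∧ pairSign β ⟨j + 1, hj⟩ = 1),
    (Mmat N)⁻¹ α β * Vfuse (pairSign β) j hj x) +
  ∑ β ∈ univ.filter (fun β : PlanarPair N =>
      pairSign β ⟨j, by omega⟩ = pairSign β ⟨j + 1, hj⟩),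
    (Mmat N)⁻¹ α β * Ufuse (pairSign β) j hj x

/-- The chamber `x_1 < ⋯ < x_{j-1} < ξ < x_{j+2} < ⋯` for single fusion at `j`:
coordinate `j` carries `ξ` and coordinate `j+1` is ignored. -/
def fusedChamber (n j : ℕ) : Set (Fin n → ℝ) :=
  {x | ∀ k l : Fin n, k < l → k.val ≠ j + 1 → l.val ≠ j + 1 → x k < x l}

/-- Successor inside `Fin n` (identity at the top). -/
def fsucc {n : ℕ} (e : Fin n) : Fin n := if h : e.val + 1 < n then ⟨e.val + 1, h⟩ else e

/-- The set `J_n^m` of permutations from the fusion combinatorics. -/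
def Jset (n m : ℕ) : Finset (Equiv.Perm (Fin n)) :=
  univ.filter fun σ =>
    (∀ k l : Fin n, k.val % 2 = 0 → l.val % 2 = 0 → k.val < l.val → l.val < 2 * m →
      σ k < σ l) ∧
    (∀ k : Fin n, k.val % 2 = 0 → k.val < 2 * m → σ k < σ (fsucc k)) ∧
    ∀ k l : Fin n, 2 * m ≤ k.val → k.val < l.val → σ k < σ l

open scoped ContDiff

/-! ### Planar pair partitions and the rows of the inverse incidence matrix -/

lemma opener_partner {N : ℕ} (β : PlanarPair N) (i : Fin (2 * N)) :
    β.val i < β.val (β.val i) ↔ ¬ i < β.val i := by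
  rw [β.2.1 i]
  have h := β.2.2.1 i
  constructor
  · intro h1 h2
    exact lt_asymm h1 h2
  · intro h1
    exact lt_of_le_of_ne (not_lt.1 h1) h

lemma sum_pairSign {N : ℕ} (β : PlanarPair N) : ∑ i, pairSign β i = 0 := by
  have h : ∑ i, pairSign β (β.val i) = ∑ i, pairSign β i :=
    Function.Bijective.sum_comp (Function.Involutive.bijective β.2.1) (pairSign β)
  have h2 : ∀ i, pairSign β (β.val i) = - pairSign β i := by
    intro i
    unfold pairSign
    simp only [opener_partner]
    by_cases h : i < β.val i <;> simp [h]
  simp only [h2, Finset.sum_neg_distrib] at h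
  linarith

/-- An opener directly followed by a closer is linked to it, by planarity. -/
lemma link_of_peak {N : ℕ} (β : PlanarPair N) (p q : Fin (2 * N)) (hpq : q.val = p.val + 1)
    (hp : p < β.val p) (hq : ¬ q < β.val q) : β.val p = q := by
  by_contra hne
  have hlt : q < β.val p := by
    rw [Fin.lt_def] at *
    have : (β.val p).val ≠ q.val := fun h => hne (Fin.ext h)
    omega
  have h1 := β.2.2.2 p q (by rw [Fin.lt_def]; omega) hlt
  have h2 := β.2.2.1 q
  apply hq
  rw [Fin.lt_def] at *
  have : (β.val q).val ≠ q.val := fun h => h2 (Fin.ext h)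
  omega

/-- Flipping a local minimum of a Dyck path into a local maximum gives a Dyck path again. In terms
of links, `{a, p}, {q, b}` with `q = p + 1` is replaced by `{p, q}, {a, b}`. -/
lemma exists_peak_of_valley {N : ℕ} (β : PlanarPair N) (p q : Fin (2 * N))
    (hpq : q.val = p.val + 1) (hp : ¬ p < β.val p) (hq : q < β.val q) :
    ∃ γ : PlanarPair N, γ.val p = q ∧
      ∀ i, i ≠ p → i ≠ q → (i < γ.val i ↔ i < β.val i) := by
  obtain ⟨f, hf1, hf2, hf3⟩ := β
  simp only at hp hq ⊢
  have hfp : f p < p := lt_of_le_of_ne (not_lt.1 hp) (hf2 p)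
  have inj : ∀ i j, f i = f j → i = j := fun i j h => by rw [← hf1 i, h, hf1]
  -- The involution with the links at `p` and `q` reconnected.
  let g : Fin (2 * N) → Fin (2 * N) := fun i =>
    if i = p then q else if i = q then p else if i = f p then f q
      else if i = f q then f p else f i
  have hpq' : p < q := by rw [Fin.lt_def]; omega
  have key : ∀ i : Fin (2 * N), i < p ∨ i = p ∨ i = q ∨ q < i := by
    intro i
    simp only [Fin.lt_def, Fin.ext_iff]
    omega
  refine ⟨⟨g, ?_, ?_, ?_⟩, ?_, ?_⟩
  · intro i
    have := hf1 i
    have := hf1 p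
    have := hf1 q
    have := hf2 i
    simp only [g]
    grind
  · intro i
    have := hf2 i
    simp only [g]
    grind
  · intro i j hij hjg
    -- All instances of injectivity and planarity of `f` that the case distinction needs, after
    -- which the claim is linear arithmetic on the indices.
    have e1 : i = f p ↔ f i = p :=
      ⟨fun h => by rw [h, hf1], fun h => by rw [← h, hf1]⟩
    have e2 : i = f q ↔ f i = q :=
      ⟨fun h => by rw [h, hf1], fun h => by rw [← h, hf1]⟩
    have e3 : j = f p ↔ f j = p :=
      ⟨fun h => by rw [h, hf1], fun h => by rw [← h, hf1]⟩
    have e4 : j = f q ↔ f j = q :=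
      ⟨fun h => by rw [h, hf1], fun h => by rw [← h, hf1]⟩
    have d1 : i = p → f i = f p := fun h => by rw [h]
    have d2 : i = q → f i = f q := fun h => by rw [h]
    have d3 : j = p → f j = f p := fun h => by rw [h]
    have d4 : j = q → f j = f q := fun h => by rw [h]
    have a1 := hf3 i j hij
    have a2 := hf3 (f p) j
    have a3 := hf3 q j
    have a4 := hf3 i p
    have a5 := hf3 i q
    rw [hf1] at a2
    have c1 := hf2 i
    have c2 := hf2 j
    have i1 := inj i p
    have i2 := inj i q
    have i3 := inj j p
    have i4 := inj j q
    simp only [g] at hjg ⊢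
    clear hf1 hf2 hf3 inj key g
    simp only [Fin.lt_def, Fin.ext_iff, ne_eq] at *
    split_ifs at hjg ⊢ <;> omega
  · simp [g]
  · intro i h1 h2
    simp only [g]
    grind

/-- The cancellation behind fusion. Let `v` be a function of Dyck paths that vanishes on slopes at
`p, q = p + 1` and takes equal values on a local minimum and the corresponding local maximum there.
If `{p, q}` is not a link of `α`, then row `α` of `M⁻¹` annihilates `v`.

The columns of `M` indexed by the `β` that contain the link `{p, q}` have these two properties,
which also imply that such a function is determined by its values on the paths with a maximum at
`p, q`; the latter are exactly the `β` that contain `{p, q}`. By a dimension count those columns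
span all such `v`. Writing `v = M c`, with `c` supported on those `β`, gives `(M⁻¹ v) α = c α = 0`.
When `M` is singular, `M⁻¹` is the zero matrix by convention, and the claim is trivial. -/
lemma inv_row_orthogonal {N : ℕ} (α : PlanarPair N) (p q : Fin (2 * N))
    (hpq : q.val = p.val + 1) (hα : α.val p ≠ q) (v : PlanarPair N → ℝ)
    (h1 : ∀ β : PlanarPair N, (p < β.val p ↔ q < β.val q) → v β = 0)
    (h2 : ∀ β γ : PlanarPair N, ¬ p < β.val p → q < β.val q → p < γ.val p → ¬ q < γ.val q →
      (∀ i, i ≠ p → i ≠ q → (i < γ.val i ↔ i < β.val i)) → v β = v γ) :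
    ∑ β, (Mmat N)⁻¹ α β * v β = 0 := by
  by_cases hM : IsUnit (Mmat N)
  swap
  · have hM' : ¬ IsUnit (Mmat N).det := fun h => hM ((Matrix.isUnit_iff_isUnit_det _).2 h)
    rw [Matrix.nonsing_inv_apply_not_isUnit _ hM']
    simp
  have hpq' : p < q := by rw [Fin.lt_def]; omega
  have hMdet : IsUnit (Mmat N).det := (Matrix.isUnit_iff_isUnit_det _).1 hM
  have link_p : ∀ β : PlanarPair N, β.val p = q → p < β.val p := fun β h => h ▸ hpq'
  have link_q : ∀ β : PlanarPair N, β.val p = q → ¬ q < β.val q := by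
    intro β h
    rw [← h, β.2.1, h]
    exact not_lt.2 hpq'.le
  -- A function with the two properties is determined by its values on the paths with a maximum.
  have ext0 : ∀ w : PlanarPair N → ℝ,
      (∀ β : PlanarPair N, (p < β.val p ↔ q < β.val q) → w β = 0) →
      (∀ β γ : PlanarPair N, ¬ p < β.val p → q < β.val q → p < γ.val p → ¬ q < γ.val q →
        (∀ i, i ≠ p → i ≠ q → (i < γ.val i ↔ i < β.val i)) → w β = w γ) →
      (∀ β : PlanarPair N, β.val p = q → w β = 0) → w = 0 := by
    intro w w1 w2 w3
    funext β
    by_cases hp : p < β.val p <;> by_cases hq : q < β.val q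
    · exact w1 β (by simp [hp, hq])
    · exact w3 β (link_of_peak β p q hpq hp hq)
    · obtain ⟨γ, hγ, hγ'⟩ := exists_peak_of_valley β p q hpq hp hq
      rw [w2 β γ hp hq (link_p γ hγ) (link_q γ hγ) hγ']
      exact w3 γ hγ
    · exact w1 β (by simp [hp, hq])
  let B := {β : PlanarPair N // β.val p = q}
  -- Extension by zero from the `β` that contain the link `{p, q}`.
  let lift : (B → ℝ) → (PlanarPair N → ℝ) := fun c β => if h : β.val p = q then c ⟨β, h⟩ else 0
  have mul_lift : ∀ c β, (Mmat N).mulVec (lift c) β = ∑ γ : B, Mmat N β γ.1 * c γ := by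
    intro c β
    have hz : ∀ γ, γ ∉ univ.filter (fun γ : PlanarPair N => γ.val p = q) →
        Mmat N β γ * lift c γ = 0 := by
      intro γ hγ
      have : ¬ γ.val p = q := by simpa using hγ
      simp [lift, this]
    simp only [Matrix.mulVec, dotProduct]
    rw [← Finset.sum_subset (Finset.subset_univ _) (fun γ _ hγ => hz γ hγ),
      ← Finset.sum_subtype_of_mem (p := fun γ : PlanarPair N => γ.val p = q)
        (f := fun γ => Mmat N β γ * lift c γ) (by simp)]
    refine Finset.sum_congr (by ext γ; simpa using γ.2) ?_
    intro γ _
    have := γ.2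
    simp [lift, this]
  have col1 : ∀ γ : B, ∀ β : PlanarPair N, (p < β.val p ↔ q < β.val q) → Mmat N β γ.1 = 0 := by
    intro γ β h
    simp only [Mmat, ite_eq_right_iff]
    intro hk
    have := hk p
    rw [γ.2] at this
    tauto
  have col2 : ∀ δ : B, ∀ β γ : PlanarPair N, ¬ p < β.val p → q < β.val q → p < γ.val p →
      ¬ q < γ.val q → (∀ i, i ≠ p → i ≠ q → (i < γ.val i ↔ i < β.val i)) →
      Mmat N β δ.1 = Mmat N γ δ.1 := by
    intro δ β γ a1 a2 a3 a4 a5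
    have hδq : δ.1.val q = p := (congrArg δ.1.val δ.2).symm.trans (δ.1.2.1 p)
    have : kwRel β δ.1 ↔ kwRel γ δ.1 := by
      unfold kwRel
      refine forall_congr' fun i => ?_
      by_cases hip : i = p
      · subst hip; rw [δ.2]; tauto
      by_cases hiq : i = q
      · subst hiq; rw [hδq]; tauto
      rw [a5 i hip hiq, a5 (δ.1.val i)]
      · intro h; apply hiq; rw [← δ.1.2.1 i, h, δ.2]
      · intro h; apply hip; rw [← δ.1.2.1 i, h, hδq]
    simp only [Mmat, this]
  -- The square block of `M` on these indices; it is injective, hence surjective.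
  let R : Matrix B B ℝ := fun β γ => Mmat N β.1 γ.1
  have hcol : ∀ c : B → ℝ, (∀ β : PlanarPair N, (p < β.val p ↔ q < β.val q) →
        (Mmat N).mulVec (lift c) β = 0) ∧
      (∀ β γ : PlanarPair N, ¬ p < β.val p → q < β.val q → p < γ.val p → ¬ q < γ.val q →
        (∀ i, i ≠ p → i ≠ q → (i < γ.val i ↔ i < β.val i)) →
        (Mmat N).mulVec (lift c) β = (Mmat N).mulVec (lift c) γ) := by
    intro c
    refine ⟨fun β h => ?_, fun β γ a1 a2 a3 a4 a5 => ?_⟩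
    · rw [mul_lift]
      exact Finset.sum_eq_zero fun γ _ => by rw [col1 γ β h, zero_mul]
    · rw [mul_lift, mul_lift]
      exact Finset.sum_congr rfl fun δ _ => by rw [col2 δ β γ a1 a2 a3 a4 a5]
  have hRinj : Function.Injective R.mulVecLin := by
    rw [← LinearMap.ker_eq_bot, LinearMap.ker_eq_bot']
    intro c hc
    have h0 : (Mmat N).mulVec (lift c) = 0 := by
      refine ext0 _ (hcol c).1 (hcol c).2 fun β hβ => ?_
      rw [mul_lift]
      exact congrFun hc ⟨β, hβ⟩
    have h3 : lift c = 0 := by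
      apply Matrix.mulVec_injective_of_isUnit hM
      rw [h0, Matrix.mulVec_zero]
    funext β
    have := congrFun h3 β.1
    simpa [lift, β.2] using this
  obtain ⟨c, hc⟩ := (LinearMap.injective_iff_surjective.1 hRinj) (fun β => v β.1)
  have hv : (Mmat N).mulVec (lift c) = v := by
    rw [← sub_eq_zero]
    refine ext0 _ (fun β h => ?_) (fun β γ a1 a2 a3 a4 a5 => ?_) fun β hβ => ?_
    · rw [Pi.sub_apply, (hcol c).1 β h, h1 β h, sub_zero]
    · rw [Pi.sub_apply, Pi.sub_apply, (hcol c).2 β γ a1 a2 a3 a4 a5, h2 β γ a1 a2 a3 a4 a5]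
    · have := congrFun hc ⟨β, hβ⟩
      rw [Pi.sub_apply, mul_lift, sub_eq_zero]
      exact this
  have : ((Mmat N)⁻¹.mulVec v) α = 0 := by
    rw [← hv, Matrix.mulVec_mulVec, Matrix.nonsing_inv_mul _ hMdet, Matrix.one_mulVec]
    simp [lift, hα]
  exact this

/-! ### Division by several differences -/

/-- Iterated mean value theorem. If a smooth `H` vanishes on each hyperplane `x (lo j) = x (hi j)`,
`j ∈ S`, near a point `P` of their intersection, then `H x / ∏ (x (hi j) - x (lo j))` is the value of
a continuous function `K` (the mixed partial derivative of `H` in the coordinates `hi j`) at a point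
that is at least as close to `P` as `x` in the sup distance. -/
lemma exists_mixed_divided_difference {n : ℕ} {ι : Type*} (lo hi : ι → Fin n)
    (hlh : ∀ j k, lo j ≠ hi k) (hinj : Function.Injective hi)
    (P : Fin n → ℝ) (hP : ∀ j, P (lo j) = P (hi j)) (ε : ℝ) (S : Finset ι) :
    ∀ H : (Fin n → ℝ) → ℝ, ContDiffOn ℝ ∞ H (Metric.ball P ε) →
      (∀ j ∈ S, ∀ x ∈ Metric.ball P ε, x (lo j) = x (hi j) → H x = 0) →
      ∃ K : (Fin n → ℝ) → ℝ, ContinuousOn K (Metric.ball P ε) ∧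
        ∀ x ∈ Metric.ball P ε, (∀ j ∈ S, x (lo j) < x (hi j)) →
          ∃ z, dist z P ≤ dist x P ∧ H x = (∏ j ∈ S, (x (hi j) - x (lo j))) * K z := by
  induction S using Finset.induction_on with
  | empty =>
    intro H hH _
    exact ⟨H, hH.continuousOn, fun x _ _ => ⟨x, le_rfl, by simp⟩⟩
  | insert j T hj ih =>
    intro H hH hz
    set H1 : (Fin n → ℝ) → ℝ := pd (hi j) H with hH1
    have hopen : IsOpen (Metric.ball P ε) := Metric.isOpen_ball
    have hderiv : ∀ x ∈ Metric.ball P ε, ∀ t, Function.update x (hi j) t ∈ Metric.ball P ε →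
        HasDerivAt (fun s => H (Function.update x (hi j) s))
          (H1 (Function.update x (hi j) t)) t := by
      intro x _ t ht
      have hd : HasFDerivAt H (fderiv ℝ H (Function.update x (hi j) t))
          (Function.update x (hi j) t) :=
        ((hH.contDiffAt (hopen.mem_nhds ht)).differentiableAt (by simp)).hasFDerivAt
      exact hd.comp_hasDerivAt t (hasDerivAt_update x (hi j) t)
    have hsm : ContDiffOn ℝ ∞ H1 (Metric.ball P ε) := by
      have h1 : ContDiffOn ℝ ∞ (fderiv ℝ H) (Metric.ball P ε) :=
        hH.fderiv_of_isOpen hopen (by simp)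
      exact h1.clm_apply contDiffOn_const
    -- The direction `hi j` is tangent to the other hyperplanes, so `H1` still vanishes on them.
    have hz1 : ∀ k ∈ T, ∀ x ∈ Metric.ball P ε, x (lo k) = x (hi k) → H1 x = 0 := by
      intro k hk x hx hxk
      have hkj : hi k ≠ hi j := fun h => hj (hinj h ▸ hk)
      have h1 := hderiv x hx (x (hi j)) (by rwa [Function.update_eq_self])
      rw [Function.update_eq_self] at h1
      have hcont : ContinuousAt (fun s => Function.update x (hi j) s) (x (hi j)) := by fun_prop
      have hev : (fun s => H (Function.update x (hi j) s)) =ᶠ[𝓝 (x (hi j))] fun _ => 0 := by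
        have : ∀ᶠ s in 𝓝 (x (hi j)), Function.update x (hi j) s ∈ Metric.ball P ε := by
          apply hcont.eventually_mem
          rw [Function.update_eq_self]
          exact hopen.mem_nhds hx
        filter_upwards [this] with s hs
        refine hz k (Finset.mem_insert_of_mem hk) _ hs ?_
        rw [Function.update_of_ne (hlh k j), Function.update_of_ne hkj, hxk]
      exact h1.unique ((hasDerivAt_const _ (0 : ℝ)).congr_of_eventuallyEq hev)
    obtain ⟨K, hK, hKx⟩ := ih H1 hsm hz1
    refine ⟨K, hK, fun x hx hlt => ?_⟩
    have hltj := hlt j (Finset.mem_insert_self _ _)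
    -- The coordinate `hi j` moves only between `x (lo j)` and `x (hi j)`, and `P` has the same value
    -- at both indices.
    have hdist : ∀ t ∈ Set.Icc (x (lo j)) (x (hi j)),
        dist (Function.update x (hi j) t) P ≤ dist x P := by
      intro t ht
      rw [dist_pi_le_iff dist_nonneg]
      intro i
      by_cases hi' : i = hi j
      · subst hi'
        rw [Function.update_self, Real.dist_eq]
        have h1 := dist_le_pi_dist x P (lo j)
        have h2 := dist_le_pi_dist x P (hi j)
        rw [Real.dist_eq, abs_le] at h1 h2
        rw [hP j] at h1
        rw [abs_le]
        constructor <;> linarith [ht.1, ht.2]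
      · rw [Function.update_of_ne hi']
        exact dist_le_pi_dist x P i
    have hball : ∀ t ∈ Set.Icc (x (lo j)) (x (hi j)),
        Function.update x (hi j) t ∈ Metric.ball P ε := fun t ht =>
      lt_of_le_of_lt (hdist t ht) hx
    obtain ⟨t, ht, hteq⟩ := exists_hasDerivAt_eq_slope
      (fun s => H (Function.update x (hi j) s))
      (fun s => H1 (Function.update x (hi j) s)) hltj
      (fun s hs => (hderiv x hx s (hball s hs)).continuousAt.continuousWithinAt)
      (fun s hs => hderiv x hx s (hball s (Set.Ioo_subset_Icc_self hs)))
    have ht' := Set.Ioo_subset_Icc_self ht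
    have hstart : H (Function.update x (hi j) (x (lo j))) = 0 := by
      refine hz j (Finset.mem_insert_self _ _) _ (hball _ (Set.left_mem_Icc.2 hltj.le)) ?_
      rw [Function.update_of_ne (hlh j j), Function.update_self]
    have hoff : ∀ k ∈ T, Function.update x (hi j) t (hi k) = x (hi k) := fun k hk =>
      Function.update_of_ne (fun h : hi k = hi j => hj (hinj h ▸ hk)) _ _
    have hoff' : ∀ k, Function.update x (hi j) t (lo k) = x (lo k) := fun k =>
      Function.update_of_ne (hlh k j) _ _
    obtain ⟨z, hz, hzeq⟩ := hKx (Function.update x (hi j) t) (hball t ht') (by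
      intro k hk
      rw [hoff k hk, hoff' k]
      exact hlt k (Finset.mem_insert_of_mem hk))
    refine ⟨z, hz.trans (hdist t ht'), ?_⟩
    simp only [hstart, Function.update_eq_self, sub_zero] at hteq
    rw [eq_div_iff (sub_pos.2 hltj).ne'] at hteq
    rw [Finset.prod_insert hj, ← hteq, hzeq, Finset.prod_congr rfl (fun k hk => by
      rw [hoff k hk, hoff' k])]
    ring

/-! ### Existence of the fusion limit -/

/-- The first index of the `k`-th pair of points to be fused. -/
def loIdx {M : ℕ} (k : Fin M) : Fin (2 * M) := ⟨2 * k.val, by have := k.2; omega⟩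

/-- The second index of the `k`-th pair of points to be fused. -/
def hiIdx {M : ℕ} (k : Fin M) : Fin (2 * M) := ⟨2 * k.val + 1, by have := k.2; omega⟩

/-- The conformal block of `β` multiplied by `∏ (x (hiIdx k) - x (loIdx k)) ^ (1/2)`, written so that
it is visibly smooth near a fusion point: the factor `(x (hiIdx k) - x (loIdx k)) ^ (±1/2 + 1/2)` is
`x (hiIdx k) - x (loIdx k)` if `β` has a slope at the `k`-th pair and `1` otherwise. -/
def regBlock {M : ℕ} (β : PlanarPair M) (x : Fin (2 * M) → ℝ) : ℝ :=
  (∏ p ∈ univ.filter (fun p : Fin (2 * M) × Fin (2 * M) => p.1.val / 2 < p.2.val / 2),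
    (x p.2 - x p.1) ^ (pairSign β p.1 * pairSign β p.2 / 2)) *
  ∏ k : Fin M, if (loIdx k < β.val (loIdx k) ↔ hiIdx k < β.val (hiIdx k)) then
    x (hiIdx k) - x (loIdx k) else 1

lemma loIdx_ne_hiIdx {M : ℕ} (j k : Fin M) : loIdx j ≠ hiIdx k := by
  simp only [loIdx, hiIdx, ne_eq, Fin.ext_iff]; omega

lemma hiIdx_injective {M : ℕ} : Function.Injective (hiIdx (M := M)) := by
  intro j k h
  simp only [hiIdx, Fin.ext_iff] at h ⊢
  omega

/-- The pairs `i < j` are those in different fusion pairs together with the fusion pairs. -/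
lemma prod_lt_eq {M : ℕ} (g : Fin (2 * M) × Fin (2 * M) → ℝ) :
    ∏ p ∈ univ.filter (fun p : Fin (2 * M) × Fin (2 * M) => p.1 < p.2), g p =
      (∏ p ∈ univ.filter (fun p : Fin (2 * M) × Fin (2 * M) => p.1.val / 2 < p.2.val / 2), g p) *
        ∏ k : Fin M, g (loIdx k, hiIdx k) := by
  rw [← Finset.prod_filter_mul_prod_filter_not _
    (fun p : Fin (2 * M) × Fin (2 * M) => p.1.val / 2 < p.2.val / 2), Finset.filter_filter,
    Finset.filter_filter]
  congr 1
  · refine Finset.prod_congr (Finset.filter_congr fun p _ => ?_) fun _ _ => rfl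
    rw [Fin.lt_def]
    omega
  · symm
    refine Finset.prod_bij (fun k _ => (loIdx k, hiIdx k)) ?_ ?_ ?_ fun _ _ => rfl
    · intro k _
      simp only [Finset.mem_filter, Finset.mem_univ, true_and, Fin.lt_def, loIdx, hiIdx]
      omega
    · intro j _ k _ h
      exact hiIdx_injective (Prod.ext_iff.1 h).2
    · rintro ⟨⟨p, hp⟩, ⟨q, hq⟩⟩ h
      simp only [Finset.mem_filter, Finset.mem_univ, true_and, Fin.lt_def] at h
      refine ⟨⟨p / 2, by omega⟩, Finset.mem_univ _, ?_⟩
      simp only [loIdx, hiIdx, Prod.mk.injEq, Fin.ext_iff]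
      omega

lemma cblock_mul_eq_regBlock {M : ℕ} (β : PlanarPair M) (x : Fin (2 * M) → ℝ)
    (hx : x ∈ chamber (2 * M)) :
    cblock (pairSign β) x * ∏ k : Fin M, (x (hiIdx k) - x (loIdx k)) ^ ((1 : ℝ) / 2) =
      regBlock β x := by
  unfold cblock regBlock
  rw [prod_lt_eq, mul_assoc, ← Finset.prod_mul_distrib]
  congr 1
  refine Finset.prod_congr rfl fun k _ => ?_
  have hpos : 0 < x (hiIdx k) - x (loIdx k) :=
    sub_pos.2 (hx _ _ (by simp [loIdx, hiIdx, Fin.lt_def]))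
  rw [← Real.rpow_add hpos]
  unfold pairSign
  by_cases h1 : loIdx k < β.val (loIdx k) <;> by_cases h2 : hiIdx k < β.val (hiIdx k) <;>
    simp [h1, h2] <;> norm_num

lemma pureZ_div_fuseDenom {N : ℕ} (α : PlanarPair (2 * N)) (x : Fin (2 * (2 * N)) → ℝ)
    (hx : x ∈ chamber (2 * (2 * N))) :
    pureZ α x / fuseDenom x =
      (∑ β, (Mmat (2 * N))⁻¹ α β * regBlock β x) /
        ∏ k : Fin (2 * N), (x (hiIdx k) - x (loIdx k)) := by
  have hpos : ∀ k : Fin (2 * N), 0 < x (hiIdx k) - x (loIdx k) := fun k =>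
    sub_pos.2 (hx _ _ (by simp [loIdx, hiIdx, Fin.lt_def]))
  have hfd : fuseDenom x = ∏ k : Fin (2 * N), (x (hiIdx k) - x (loIdx k)) ^ ((1 : ℝ) / 2) := rfl
  have hpos' : 0 < fuseDenom x := by
    rw [hfd]; exact Finset.prod_pos fun k _ => Real.rpow_pos_of_pos (hpos k) _
  have hsq : ∏ k : Fin (2 * N), (x (hiIdx k) - x (loIdx k)) = fuseDenom x * fuseDenom x := by
    rw [hfd, ← Finset.prod_mul_distrib]
    refine Finset.prod_congr rfl fun k _ => ?_
    rw [← Real.rpow_add (hpos k)]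
    norm_num
  have hnum : ∑ β, (Mmat (2 * N))⁻¹ α β * regBlock β x = pureZ α x * fuseDenom x := by
    unfold pureZ
    rw [Finset.sum_mul]
    refine Finset.sum_congr rfl fun β _ => ?_
    rw [← cblock_mul_eq_regBlock β x hx, hfd, mul_assoc]
  rw [hnum, hsq, mul_div_mul_right _ _ hpos'.ne']

lemma regBlock_slope {M : ℕ} (β : PlanarPair M) (k : Fin M) (x : Fin (2 * M) → ℝ)
    (hx : x (loIdx k) = x (hiIdx k))
    (h : loIdx k < β.val (loIdx k) ↔ hiIdx k < β.val (hiIdx k)) : regBlock β x = 0 := by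
  unfold regBlock
  rw [Finset.prod_eq_zero (Finset.mem_univ k), mul_zero]
  rw [if_pos h, hx, sub_self]

/-- When the two points of the `k`-th pair coincide, the regularized blocks of a local minimum and of
the corresponding local maximum at that pair agree: the transposition of the two indices exchanges
the sign sequences and fixes the configuration. -/
lemma regBlock_swap {M : ℕ} (β γ : PlanarPair M) (k : Fin M) (x : Fin (2 * M) → ℝ)
    (hx : x (loIdx k) = x (hiIdx k))
    (h1 : ¬ loIdx k < β.val (loIdx k)) (h2 : hiIdx k < β.val (hiIdx k))
    (h3 : loIdx k < γ.val (loIdx k)) (h4 : ¬ hiIdx k < γ.val (hiIdx k))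
    (h5 : ∀ i, i ≠ loIdx k → i ≠ hiIdx k → (i < γ.val i ↔ i < β.val i)) :
    regBlock β x = regBlock γ x := by
  unfold regBlock
  congr 1
  · set τ : Equiv.Perm (Fin (2 * M)) := Equiv.swap (loIdx k) (hiIdx k) with hτ
    have hxτ : ∀ i, x (τ i) = x i := by
      intro i
      rw [hτ, Equiv.swap_apply_def]
      split_ifs with ha hb
      · rw [ha, hx]
      · rw [hb, hx]
      · rfl
    have hστ : ∀ i, pairSign γ (τ i) = pairSign β i := by
      intro i
      unfold pairSign
      by_cases ha : i = loIdx k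
      · subst ha
        rw [hτ, Equiv.swap_apply_left, if_neg h4, if_neg h1]
      by_cases hb : i = hiIdx k
      · subst hb
        rw [hτ, Equiv.swap_apply_right, if_pos h2, if_pos h3]
      rw [hτ, Equiv.swap_apply_of_ne_of_ne ha hb]
      simp only [h5 i ha hb]
    have hdiv : ∀ i, (τ i).val / 2 = i.val / 2 := by
      intro i
      rw [hτ, Equiv.swap_apply_def]
      split_ifs with ha hb
      · rw [ha]; simp only [loIdx, hiIdx]; omega
      · rw [hb]; simp only [loIdx, hiIdx]; omega
      · rfl
    refine Finset.prod_equiv (τ.prodCongr τ) ?_ ?_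
    · rintro ⟨p, q⟩
      simp [hdiv]
    · rintro ⟨p, q⟩ _
      simp [hxτ, hστ]
  · refine Finset.prod_congr rfl fun l _ => ?_
    by_cases hl : l = k
    · subst hl
      simp [h1, h2, h3, h4]
    · have hv : l.val ≠ k.val := fun h => hl (Fin.ext h)
      simp only [h5 (loIdx l) (by simp only [loIdx, ne_eq, Fin.ext_iff]; omega)
          (loIdx_ne_hiIdx l k),
        h5 (hiIdx l) (loIdx_ne_hiIdx k l).symm
          (by simp only [hiIdx, ne_eq, Fin.ext_iff]; omega)]

/-- The fusion limit exists: the numerator `∑ (M⁻¹) α β * regBlock β` is smooth at the fusion point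
and vanishes whenever some fused pair coincides, so it is divisible by all the differences. -/
lemma exists_fused_limit {N : ℕ} (α : PlanarPair (2 * N)) (hα : noFuseLink α)
    (y : Fin (2 * N) → ℝ) (hy : y ∈ chamber (2 * N)) :
    ∃ L, Tendsto (fun x => pureZ α x / fuseDenom x) (𝓝[chamber (2 * (2 * N))] dup y) (𝓝 L) := by
  set P : Fin (2 * (2 * N)) → ℝ := dup y with hPdef
  have hP : ∀ k : Fin (2 * N), P (loIdx k) = P (hiIdx k) := by
    intro k
    simp only [hPdef, dup, loIdx, hiIdx]
    congr 2
    omega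
  have hev : ∀ᶠ x in 𝓝 P, ∀ p : Fin (2 * (2 * N)) × Fin (2 * (2 * N)),
      p.1.val / 2 < p.2.val / 2 → x p.1 < x p.2 := by
    rw [Filter.eventually_all]
    intro p
    by_cases hp : p.1.val / 2 < p.2.val / 2
    · have hlt : P p.1 < P p.2 := hy _ _ (by simpa [Fin.lt_def] using hp)
      have h1 : Tendsto (fun x : Fin (2 * (2 * N)) → ℝ => x p.1) (𝓝 P) (𝓝 (P p.1)) :=
        (continuous_apply p.1).tendsto P
      have h2 : Tendsto (fun x : Fin (2 * (2 * N)) → ℝ => x p.2) (𝓝 P) (𝓝 (P p.2)) :=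
        (continuous_apply p.2).tendsto P
      filter_upwards [h1.eventually_lt h2 hlt] with x hx _ using hx
    · exact Filter.Eventually.of_forall fun x h => absurd h hp
  obtain ⟨ε, hε, hball⟩ := Metric.eventually_nhds_iff_ball.1 hev
  set H : (Fin (2 * (2 * N)) → ℝ) → ℝ :=
    fun x => ∑ β, (Mmat (2 * N))⁻¹ α β * regBlock β x with hH
  have hcoord : ∀ i : Fin (2 * (2 * N)),
      ContDiffOn ℝ ∞ (fun x : Fin (2 * (2 * N)) → ℝ => x i) (Metric.ball P ε) := fun i =>
    (contDiff_apply ℝ ℝ i).contDiffOn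
  have hsm : ContDiffOn ℝ ∞ H (Metric.ball P ε) := by
    refine ContDiffOn.sum fun β _ => contDiffOn_const.mul ?_
    unfold regBlock
    refine ContDiffOn.mul (contDiffOn_prod fun p hp => ?_) (contDiffOn_prod fun k _ => ?_)
    · refine ((hcoord p.2).sub (hcoord p.1)).rpow_const_of_ne fun x hx => ?_
      exact (sub_pos.2 (hball x hx p (Finset.mem_filter.1 hp).2)).ne'
    · split_ifs
      · exact (hcoord _).sub (hcoord _)
      · exact contDiffOn_const
  have hvanish : ∀ k ∈ (univ : Finset (Fin (2 * N))), ∀ x ∈ Metric.ball P ε,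
      x (loIdx k) = x (hiIdx k) → H x = 0 := by
    intro k _ x _ hx
    exact inv_row_orthogonal α (loIdx k) (hiIdx k) rfl (hα k) (fun β => regBlock β x)
      (fun β h => regBlock_slope β k x hx h)
      (fun β γ h1 h2 h3 h4 h5 => regBlock_swap β γ k x hx h1 h2 h3 h4 h5)
  obtain ⟨K, hK, hKx⟩ := exists_mixed_divided_difference loIdx hiIdx loIdx_ne_hiIdx
    hiIdx_injective P hP ε univ H hsm hvanish
  refine ⟨K P, ?_⟩
  have hKP : ContinuousAt K P := hK.continuousAt (Metric.ball_mem_nhds P hε)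
  rw [Metric.tendsto_nhds]
  intro η hη
  obtain ⟨δ, hδ, hKδ⟩ := Metric.continuousAt_iff.1 hKP η hη
  have hin : ∀ᶠ x in 𝓝[chamber (2 * (2 * N))] P, x ∈ Metric.ball P (min ε δ) :=
    mem_nhdsWithin_of_mem_nhds (Metric.ball_mem_nhds P (lt_min hε hδ))
  filter_upwards [hin, self_mem_nhdsWithin] with x hx hxc
  have hlt : ∀ k : Fin (2 * N), x (loIdx k) < x (hiIdx k) := fun k =>
    hxc _ _ (by simp [loIdx, hiIdx, Fin.lt_def])
  obtain ⟨z, hz, hzeq⟩ := hKx x (Metric.ball_subset_ball (min_le_left _ _) hx) (fun k _ => hlt k)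
  have hprod : (∏ k : Fin (2 * N), (x (hiIdx k) - x (loIdx k))) ≠ 0 :=
    Finset.prod_ne_zero_iff.2 fun k _ => (sub_pos.2 (hlt k)).ne'
  have hval : pureZ α x / fuseDenom x = K z := by
    rw [pureZ_div_fuseDenom α x hxc]
    change H x / _ = _
    rw [hzeq, mul_div_cancel_left₀ _ hprod]
  rw [hval]
  exact hKδ (lt_of_le_of_lt hz (Metric.ball_subset_ball (min_le_right _ _) hx))

/-! ### Möbius covariance -/

lemma prod_fin_two_mul {M : ℕ} (g : Fin (2 * M) → ℝ) :
    ∏ i, g i = ∏ k : Fin M, (g (loIdx k) * g (hiIdx k)) := by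
  rw [← (finProdFinEquiv (m := M) (n := 2)).trans (finCongr (mul_comm M 2)) |>.prod_comp,
    Fintype.prod_prod_type]
  refine Finset.prod_congr rfl fun k _ => ?_
  rw [Fin.prod_univ_two]
  congr 2
  · ext; simp [loIdx, finProdFinEquiv]
  · ext; simp [hiIdx, finProdFinEquiv, add_comm]

/-- Since the signs sum to zero, `∏_{i<j} (m i * m j) ^ (σ i * σ j / 2) = ∏ m i ^ (-1/2)`: the exponent
of `m i` is `σ i * (∑_{j ≠ i} σ j) / 2 = -1/2`. -/
lemma prod_pair_rpow {n : ℕ} (σ m : Fin n → ℝ) (hσ : ∀ i, σ i * σ i = 1)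
    (hsum : ∑ i, σ i = 0) (hm : ∀ i, 0 < m i) :
    (∏ p ∈ univ.filter (fun p : Fin n × Fin n => p.1 < p.2),
      (m p.1 * m p.2) ^ (σ p.1 * σ p.2 / 2)) * ∏ i, m i ^ ((1 : ℝ) / 2) = 1 := by
  set g : Fin n × Fin n → ℝ := fun p => m p.1 ^ (σ p.1 * σ p.2 / 2) with hg
  have hall : ∏ p : Fin n × Fin n, g p = 1 := by
    rw [Fintype.prod_prod_type]
    refine Finset.prod_eq_one fun i _ => ?_
    rw [← Real.rpow_sum_of_pos (hm i), ← Finset.sum_div]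
    simp only
    rw [← Finset.mul_sum, hsum]
    simp
  have hsplit : ∏ p ∈ univ.filter (fun p : Fin n × Fin n => p.1 < p.2),
      (m p.1 * m p.2) ^ (σ p.1 * σ p.2 / 2) =
      (∏ p ∈ univ.filter (fun p : Fin n × Fin n => p.1 < p.2), g p) *
        ∏ p ∈ univ.filter (fun p : Fin n × Fin n => p.2 < p.1), g p := by
    have : ∏ p ∈ univ.filter (fun p : Fin n × Fin n => p.2 < p.1), g p =
        ∏ p ∈ univ.filter (fun p : Fin n × Fin n => p.1 < p.2), g p.swap :=
      (Finset.prod_equiv (Equiv.prodComm _ _) (by simp) (by simp)).symm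
    rw [this, ← Finset.prod_mul_distrib]
    refine Finset.prod_congr rfl fun p _ => ?_
    rw [Real.mul_rpow (hm _).le (hm _).le]
    simp only [hg, Prod.fst_swap, Prod.snd_swap]
    rw [mul_comm (σ p.2) (σ p.1)]
  have hdiag : ∏ p ∈ univ.filter (fun p : Fin n × Fin n => p.1 = p.2), g p =
      ∏ i, m i ^ ((1 : ℝ) / 2) := by
    symm
    refine Finset.prod_bij (fun i _ => (i, i)) (by simp) (by simp) ?_ ?_
    · rintro ⟨i, j⟩ h
      have : i = j := by simpa using h
      exact ⟨i, Finset.mem_univ _, by rw [this]⟩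
    · intro i _
      simp only [hg, hσ]
  rw [hsplit, ← hdiag, ← hall,
    ← Finset.prod_filter_mul_prod_filter_not univ (fun p : Fin n × Fin n => p.1 < p.2) g, mul_assoc]
  congr 1
  rw [← Finset.prod_filter_mul_prod_filter_not
    (univ.filter (fun p : Fin n × Fin n => ¬ p.1 < p.2)) (fun p => p.2 < p.1) g,
    Finset.filter_filter, Finset.filter_filter]
  congr 1
  · refine Finset.prod_congr (Finset.filter_congr fun p _ => ?_) fun _ _ => rfl
    exact ⟨fun h => ⟨not_lt.2 h.le, h⟩, fun h => h.2⟩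
  · refine Finset.prod_congr (Finset.filter_congr fun p _ => ?_) fun _ _ => rfl
    exact ⟨fun h => by simp [h], fun h => le_antisymm (not_lt.1 h.2) (not_lt.1 h.1)⟩

/-- Covariance before the limit. A Möbius map `φ` with `x' = φ ∘ x` scales differences by
`m i * m j` with `m i = φ' (x i) ^ (1/2)`. -/
lemma ratio_of_scaled {N : ℕ} (α : PlanarPair (2 * N)) (x x' m : Fin (2 * (2 * N)) → ℝ)
    (hx : x ∈ chamber (2 * (2 * N))) (hm : ∀ i, 0 < m i)
    (hxx' : ∀ i j, x' j - x' i = (x j - x i) * (m i * m j)) :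
    pureZ α x / fuseDenom x = (∏ i, m i) * (pureZ α x' / fuseDenom x') := by
  set A := ∏ i, m i ^ ((1 : ℝ) / 2) with hA
  have hApos : 0 < A := Finset.prod_pos fun i _ => Real.rpow_pos_of_pos (hm i) _
  have hAA : ∏ i, m i = A * A := by
    rw [hA, ← Finset.prod_mul_distrib]
    refine Finset.prod_congr rfl fun i _ => ?_
    rw [← Real.rpow_add (hm i)]
    norm_num
  have hblock : ∀ β : PlanarPair (2 * N),
      cblock (pairSign β) x' * A = cblock (pairSign β) x := by
    intro β
    have h : cblock (pairSign β) x' = cblock (pairSign β) x *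
        ∏ p ∈ univ.filter (fun p : Fin (2 * (2 * N)) × Fin (2 * (2 * N)) => p.1 < p.2),
          (m p.1 * m p.2) ^ (pairSign β p.1 * pairSign β p.2 / 2) := by
      unfold cblock
      rw [← Finset.prod_mul_distrib]
      refine Finset.prod_congr rfl fun p hp => ?_
      rw [hxx', Real.mul_rpow (sub_pos.2 (hx _ _ (Finset.mem_filter.1 hp).2)).le
        (mul_pos (hm _) (hm _)).le]
    rw [h, mul_assoc, hA, prod_pair_rpow (pairSign β) m _ (sum_pairSign β) hm, mul_one]
    intro i
    unfold pairSign
    split_ifs <;> norm_num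
  have hZ : pureZ α x' * A = pureZ α x := by
    unfold pureZ
    rw [Finset.sum_mul]
    exact Finset.sum_congr rfl fun β _ => by rw [mul_assoc, hblock]
  have hpos : ∀ k : Fin (2 * N), 0 < x (hiIdx k) - x (loIdx k) := fun k =>
    sub_pos.2 (hx _ _ (by simp [loIdx, hiIdx, Fin.lt_def]))
  have hfd : ∀ z, fuseDenom z =
      ∏ k : Fin (2 * N), (z (hiIdx k) - z (loIdx k)) ^ ((1 : ℝ) / 2) := fun z => rfl
  have hD : fuseDenom x' = fuseDenom x * A := by
    rw [hfd, hfd, hA, prod_fin_two_mul (fun i => m i ^ ((1 : ℝ) / 2)), ← Finset.prod_mul_distrib]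
    refine Finset.prod_congr rfl fun k _ => ?_
    rw [hxx', Real.mul_rpow (hpos k).le (mul_pos (hm _) (hm _)).le,
      Real.mul_rpow (hm _).le (hm _).le]
  have hDpos : fuseDenom x ≠ 0 := by
    rw [hfd]
    exact (Finset.prod_pos fun k _ => Real.rpow_pos_of_pos (hpos k) _).ne'
  rw [hAA, ← hZ, hD]
  field_simp

/-- The fusion point lies in the closure of the chamber, so limits there are unique. -/
lemma nhdsWithin_chamber_neBot {N : ℕ} (y : Fin (2 * N) → ℝ) (hy : y ∈ chamber (2 * N)) :
    (𝓝[chamber (2 * (2 * N))] dup y).NeBot := by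
  -- The chamber is approached along `dup y i + t * i` as `t ↓ 0`.
  have hcont : Tendsto (fun t : ℝ => fun i : Fin (2 * (2 * N)) => dup y i + t * i.val)
      (𝓝[>] 0) (𝓝[chamber (2 * (2 * N))] dup y) := by
    rw [tendsto_nhdsWithin_iff]
    constructor
    · have : Continuous (fun t : ℝ => fun i : Fin (2 * (2 * N)) => dup y i + t * i.val) := by
        fun_prop
      have h := this.tendsto 0
      simp only [zero_mul, add_zero] at h
      exact h.mono_left nhdsWithin_le_nhds
    · filter_upwards [self_mem_nhdsWithin] with t ht
      intro i j hij
      have h1 : dup y i ≤ dup y j := by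
        unfold dup
        rw [Fin.lt_def] at hij
        rcases Nat.lt_or_ge (i.val / 2) (j.val / 2) with h | h
        · exact (hy _ _ (by rw [Fin.lt_def]; exact h)).le
        · apply le_of_eq
          congr 2
          omega
      have h2 : (i.val : ℝ) < j.val := by exact_mod_cast hij
      have h3 : t * (i.val : ℝ) < t * j.val := mul_lt_mul_of_pos_left h2 ht
      show dup y i + t * i.val < dup y j + t * j.val
      linarith
  exact hcont.neBot

/-- Möbius covariance of the fused pure partition function with
conformal weight `H = 1`. -/
theorem fusedZ_mobiusCovariance (N : ℕ) (hN : 1 ≤ N)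
    (α : PlanarPair (2 * N)) (hα : noFuseLink α)
    (a b c d : ℝ) (habcd : a * d - b * c > 0)
    (y : Fin (2 * N) → ℝ) (hy : y ∈ chamber (2 * N))
    (hden : ∀ i : Fin (2 * N), c * y i + d ≠ 0)
    (hord : ∀ i j : Fin (2 * N), i < j →
      (a * y i + b) / (c * y i + d) < (a * y j + b) / (c * y j + d)) :
    fusedZ α y =
      (∏ i : Fin (2 * N), (a * d - b * c) / (c * y i + d) ^ 2) *
        fusedZ α (fun i => (a * y i + b) / (c * y i + d)) := by
  set φ : ℝ → ℝ := fun t => (a * t + b) / (c * t + d) with hφ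
  set D := a * d - b * c with hD
  have hφsub : ∀ s t : ℝ, c * s + d ≠ 0 → c * t + d ≠ 0 →
      φ t - φ s = (t - s) * (D / ((c * s + d) * (c * t + d))) := by
    intro s t hs ht
    simp only [hφ, hD]
    rw [div_sub_div _ _ ht hs, mul_div_assoc', div_eq_div_iff (mul_ne_zero ht hs)
      (mul_ne_zero hs ht)]
    ring
  -- The points `φ (y i)` are in order, so no pole of `φ` lies between the `y i` and the denominators
  -- share one sign.
  have hsign : ∀ i j, 0 < (c * y i + d) * (c * y j + d) := by
    have hlt : ∀ i j, i < j → 0 < (c * y i + d) * (c * y j + d) := by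
      intro i j hij
      have h1 : 0 < φ (y j) - φ (y i) := sub_pos.2 (hord i j hij)
      rw [hφsub _ _ (hden i) (hden j)] at h1
      have h2 := pos_of_mul_pos_right h1 (sub_pos.2 (hy i j hij)).le
      exact (div_pos_iff_of_pos_left habcd).1 h2
    intro i j
    rcases lt_trichotomy i j with h | h | h
    · exact hlt i j h
    · rw [h]
      exact mul_self_pos.2 (hden j)
    · rw [mul_comm]
      exact hlt j i h
  set y' : Fin (2 * N) → ℝ := fun i => φ (y i) with hy'
  have hy'c : y' ∈ chamber (2 * N) := hord
  set F := 𝓝[chamber (2 * (2 * N))] dup y with hF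
  obtain ⟨L, hL⟩ := exists_fused_limit α hα y' hy'c
  have hden' : ∀ i, c * dup y i + d ≠ 0 := fun i => hden _
  have hx : Tendsto (fun x : Fin (2 * (2 * N)) → ℝ => x) F (𝓝 (dup y)) :=
    tendsto_id.mono_left nhdsWithin_le_nhds
  have hxi : ∀ i, Tendsto (fun x : Fin (2 * (2 * N)) → ℝ => x i) F (𝓝 (dup y i)) := fun i =>
    ((continuous_apply i).tendsto _).comp hx
  have hw : ∀ i, Tendsto (fun x : Fin (2 * (2 * N)) → ℝ => c * x i + d) F
      (𝓝 (c * dup y i + d)) := fun i => ((hxi i).const_mul c).add_const d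
  have hwpos : ∀ᶠ x in F, ∀ i j, 0 < (c * x i + d) * (c * x j + d) := by
    rw [Filter.eventually_all]
    intro i
    rw [Filter.eventually_all]
    intro j
    exact ((hw i).mul (hw j)).eventually_const_lt (hsign _ _)
  have hmem : ∀ᶠ x in F, x ∈ chamber (2 * (2 * N)) := self_mem_nhdsWithin
  have hmap : Tendsto (fun x : Fin (2 * (2 * N)) → ℝ => fun i => φ (x i)) F
      (𝓝[chamber (2 * (2 * N))] dup y') := by
    rw [tendsto_nhdsWithin_iff]
    constructor
    · rw [tendsto_pi_nhds]
      intro i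
      exact (((hxi i).const_mul a).add_const b).div (hw i) (hden' i)
    · filter_upwards [hwpos, hmem] with x h1 h2 i j hij
      have hi : c * x i + d ≠ 0 := fun h => by simpa [h] using h1 i i
      have hj : c * x j + d ≠ 0 := fun h => by simpa [h] using h1 j j
      rw [← sub_pos, hφsub _ _ hi hj]
      exact mul_pos (sub_pos.2 (h2 i j hij)) (div_pos habcd (h1 i j))
  -- The square root of `φ'` at the `i`-th point.
  set m : (Fin (2 * (2 * N)) → ℝ) → Fin (2 * (2 * N)) → ℝ :=
    fun x i => √D / |c * x i + d| with hm
  have hratio : ∀ᶠ x in F, (∏ i, m x i) *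
      (pureZ α (fun i => φ (x i)) / fuseDenom (fun i => φ (x i))) =
        pureZ α x / fuseDenom x := by
    filter_upwards [hwpos, hmem] with x h1 h2
    have hne : ∀ i, c * x i + d ≠ 0 := fun i h => by simpa [h] using h1 i i
    refine (ratio_of_scaled α x _ (m x) h2 (fun i => ?_) fun i j => ?_).symm
    · exact div_pos (Real.sqrt_pos.2 habcd) (abs_pos.2 (hne i))
    · rw [hφsub _ _ (hne i) (hne j), hm]
      simp only
      rw [div_mul_div_comm, Real.mul_self_sqrt habcd.le, ← abs_mul, abs_of_pos (h1 i j)]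
  have hmlim : Tendsto (fun x => ∏ i, m x i) F (𝓝 (∏ i, m (dup y) i)) :=
    tendsto_finsetProd _ fun i _ =>
      tendsto_const_nhds.div (hw i).abs (abs_ne_zero.2 (hden' i))
  have hmval : ∏ i, m (dup y) i = ∏ i : Fin (2 * N), D / (c * y i + d) ^ 2 := by
    rw [prod_fin_two_mul]
    refine Finset.prod_congr rfl fun k _ => ?_
    have h1 : dup y (loIdx k) = y k := by
      simp only [dup, loIdx]; congr 1; ext; simp
    have h2 : dup y (hiIdx k) = y k := by
      simp only [dup, hiIdx]; congr 1; ext; simp; omega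
    simp only [hm]
    rw [h1, h2, div_mul_div_comm, Real.mul_self_sqrt habcd.le, abs_mul_abs_self, sq]
  have hlim : Tendsto (fun x => pureZ α x / fuseDenom x) F
      (𝓝 ((∏ i : Fin (2 * N), D / (c * y i + d) ^ 2) * L)) := by
    rw [← hmval]
    exact (hmlim.mul (hL.comp hmap)).congr' hratio
  have := nhdsWithin_chamber_neBot y hy
  have := nhdsWithin_chamber_neBot y' hy'c
  have e1 : fusedZ α y = (∏ i : Fin (2 * N), D / (c * y i + d) ^ 2) * L := hlim.limUnder_eq
  have e2 : fusedZ α y' = L := hL.limUnder_eq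
  rw [e1, e2]
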